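/- arXiv:1411.5282 — 7 statements merged into one kernel-verified Lean document; each statement's English description precedes it below -/
import Mathlib

section
/- For every n ≥ 4 there exists a directed graph G on n vertices with a self-loop at every vertex such that: (i) G satisfies Condition NC with parameters f = 1 and l = 1; (ii) every vertex i has exactly 4 in-neighbors including itself, i.e., |N_i^−| = 4; and (iii) G has exactly 4n directed edges, counting the self-loops. -/
/-- `p` is a directed path (a nonempty list of distinct vertices, with consecutive vertices
joined by edges of `E`) from some vertex of `W` to `x`, with at most `l` edges. -/
def IsWxPath {V : Type} (E : V → V → Prop) (l : ℕ) (W : Finset V) (x : V)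
    (p : List V) : Prop :=
  p.Chain' E ∧ p.Nodup ∧ (∃ w ∈ W, p.head? = some w) ∧ p.getLast? = some x ∧
    p.length ≤ l + 1

/-- `S` is an `l`-restricted `(W,x)`-vertex cut for the edge relation `E`:
`x ∉ S` and every `(W,x)`-path of length at most `l` contains a vertex of `S`. -/
def IsCut {V : Type} (E : V → V → Prop) (l : ℕ) (W : Finset V) (x : V)
    (S : Finset V) : Prop :=
  x ∉ S ∧ ∀ p : List V, IsWxPath E l W x p → ∃ s ∈ S, s ∈ p

/-- `A ⇒_l B`: there is `i ∈ B` with `κ_l(A, i) ≥ f + 1`, i.e. every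
`l`-restricted `(A,i)`-vertex cut has at least `f + 1` vertices. -/
def ArrowL {V : Type} (E : V → V → Prop) (f l : ℕ) (A B : Finset V) : Prop :=
  ∃ i ∈ B, ∀ S : Finset V, IsCut E l A i S → f + 1 ≤ S.card

/-- Edge relation of the subgraph induced on the complement of `F`. -/
def inducedE {V : Type} (E : V → V → Prop) (F : Finset V) : V → V → Prop :=
  fun u v => u ∉ F ∧ v ∉ F ∧ E u v

/-- `L, C, R, F` form a partition of the vertex set into four pairwise disjoint sets. -/
def IsPartition4 {V : Type} [Fintype V] [DecidableEq V] (L C R F : Finset V) : Prop :=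
  L ∪ C ∪ R ∪ F = Finset.univ ∧ Disjoint L C ∧ Disjoint L R ∧ Disjoint L F ∧
    Disjoint C R ∧ Disjoint C F ∧ Disjoint R F

/-- Condition NC for parameters `f` and `l`: for every partition `L, C, R, F` of the
vertex set with `L, R` nonempty and `|F| ≤ f`, in the induced subgraph `G_F` either
`R ∪ C ⇒_l L` or `L ∪ C ⇒_l R`. -/
def CondNC {V : Type} [Fintype V] [DecidableEq V] (E : V → V → Prop) (f l : ℕ) : Prop :=
  ∀ L C R F : Finset V, IsPartition4 L C R F → L.Nonempty → R.Nonempty → F.card ≤ f →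
    ArrowL (inducedE E F) f l (R ∪ C) L ∨ ArrowL (inducedE E F) f l (L ∪ C) R

/-!
Let `K` be a clique on more than `3f` vertices such that every other vertex has more than `2f`
in-neighbors in `K`. If `L` misses `K`, then any vertex of `L` keeps more than `f` in-neighbors in
`R ∪ C` once the at most `f` vertices of `F` are removed; likewise for `R`. If both meet `K`, a
vertex of `L ∩ K` is joined from all of `K ∩ (R ∪ C)` and a vertex of `R ∩ K` from all of
`K ∩ (L ∪ C)`. These two sets together with `F` cover `K`, so one of them has more than `f`
elements. Paths of length one therefore already give Condition NC.
-/

lemma lt_card_sdiff_or_lt_card_sdiff {α : Type*} [DecidableEq α] {K L R F : Finset α} {f : ℕ}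
    (hLR : Disjoint L R) (hF : F.card ≤ f) (hK : 3 * f < K.card) :
    f < (K \ (L ∪ F)).card ∨ f < (K \ (R ∪ F)).card := by
  have hcover : K ⊆ K \ (L ∪ F) ∪ K \ (R ∪ F) ∪ F := fun u hu => by
    have : u ∈ L → u ∉ R := fun h => Finset.disjoint_left.1 hLR h
    simp only [Finset.mem_union, Finset.mem_sdiff]
    tauto
  have := Finset.card_le_card hcover
  have := Finset.card_union_le (K \ (L ∪ F) ∪ K \ (R ∪ F)) F
  have := Finset.card_union_le (K \ (L ∪ F)) (K \ (R ∪ F))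
  omega

section CondNC

variable {V : Type} {E : V → V → Prop} {f l : ℕ}

lemma IsCut.mem_of_adj {W S : Finset V} {w x : V} (hS : IsCut E l W x S) (hl : 1 ≤ l)
    (hw : w ∈ W) (hwx : w ≠ x) (hadj : E w x) : w ∈ S := by
  have hpath : IsWxPath E l W x [w, x] :=
    ⟨List.isChain_pair.2 hadj, by simpa using hwx, ⟨w, hw, rfl⟩, rfl, by simpa using hl⟩
  obtain ⟨s, hs, hsp⟩ := hS.2 _ hpath
  rcases List.mem_pair.1 hsp with rfl | rfl
  · exact hs
  · exact absurd hs hS.1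

lemma arrowL_of_lt_card_inNeighbors {A B N : Finset V} {i : V} (hl : 1 ≤ l) (hi : i ∈ B)
    (hNA : N ⊆ A) (hiN : i ∉ N) (hadj : ∀ u ∈ N, E u i) (hcard : f < N.card) :
    ArrowL E f l A B :=
  ⟨i, hi, fun _ hS => hcard.trans_le <| Finset.card_le_card fun u hu =>
    hS.mem_of_adj hl (hNA hu) (ne_of_mem_of_not_mem hu hiN) (hadj u hu)⟩

variable [Fintype V] [DecidableEq V]

lemma arrowL_inducedE_compl_of_lt_card {F L N : Finset V} {i : V} (hl : 1 ≤ l) (hiL : i ∈ L)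
    (hiF : i ∉ F) (hN : N ⊆ (L ∪ F)ᶜ) (hadj : ∀ u ∈ N, E u i) (hcard : f < N.card) :
    ArrowL (inducedE E F) f l (L ∪ F)ᶜ L := by
  have hN' : ∀ u ∈ N, u ∉ L ∧ u ∉ F := fun u hu => by simpa using hN hu
  exact arrowL_of_lt_card_inNeighbors hl hiL hN (fun h => (hN' i h).1 hiL)
    (fun u hu => ⟨(hN' u hu).2, hiF, hadj u hu⟩) hcard

lemma IsPartition4.symm {L C R F : Finset V} (h : IsPartition4 L C R F) :
    IsPartition4 R C L F := by
  obtain ⟨hU, hLC, hLR, hLF, hCR, hCF, hRF⟩ := h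
  refine ⟨?_, hCR.symm, hLR.symm, hRF, hLC.symm, hCF, hLF⟩
  rw [← hU, Finset.union_assoc R, Finset.union_comm R, Finset.union_comm C]

lemma IsPartition4.union_eq_compl {L C R F : Finset V} (h : IsPartition4 L C R F) :
    R ∪ C = (L ∪ F)ᶜ := by
  obtain ⟨hU, hLC, hLR, -, -, hCF, hRF⟩ := h
  refine eq_compl_iff_isCompl.2 ⟨?_, ?_⟩
  · simp only [Finset.disjoint_union_left, Finset.disjoint_union_right]
    exact ⟨⟨hLR.symm, hLC.symm⟩, hRF, hCF⟩
  · rw [codisjoint_iff, Finset.sup_eq_union, Finset.top_eq_univ, ← hU]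
    ac_rfl

lemma arrowL_inducedE_of_disjoint {K F L : Finset V} (hl : 1 ≤ l)
    (hin : ∀ v ∉ K, ∃ N ⊆ K, 2 * f < N.card ∧ ∀ u ∈ N, E u v) (hF : F.card ≤ f)
    (hL : L.Nonempty) (hLF : Disjoint L F) (hKL : Disjoint K L) :
    ArrowL (inducedE E F) f l (L ∪ F)ᶜ L := by
  obtain ⟨v, hv⟩ := hL
  obtain ⟨N, hNK, hNcard, hadj⟩ := hin v (Finset.disjoint_right.1 hKL hv)
  have hsub : N \ F ⊆ (L ∪ F)ᶜ := fun u hu => by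
    obtain ⟨huN, huF⟩ := Finset.mem_sdiff.1 hu
    simp [huF, Finset.disjoint_left.1 hKL (hNK huN)]
  have hcard : f < (N \ F).card := by
    have := Finset.le_card_sdiff F N
    omega
  exact arrowL_inducedE_compl_of_lt_card hl hv (Finset.disjoint_left.1 hLF hv) hsub
    (fun u hu => hadj u (Finset.sdiff_subset hu)) hcard

lemma arrowL_inducedE_of_pairwise {K F L : Finset V} (hl : 1 ≤ l) (hK : (K : Set V).Pairwise E)
    (hLF : Disjoint L F) (hKL : ¬Disjoint K L) (hcard : f < (K \ (L ∪ F)).card) :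
    ArrowL (inducedE E F) f l (L ∪ F)ᶜ L := by
  obtain ⟨i, hiK, hiL⟩ := Finset.not_disjoint_iff.1 hKL
  refine arrowL_inducedE_compl_of_lt_card hl hiL (Finset.disjoint_left.1 hLF hiL)
    (fun u hu => Finset.mem_compl.2 (Finset.mem_sdiff.1 hu).2) (fun u hu => ?_) hcard
  obtain ⟨huK, hu⟩ := Finset.mem_sdiff.1 hu
  exact hK huK hiK fun h => hu (h ▸ Finset.mem_union_left F hiL)

theorem condNC_of_clique {K : Finset V} (hl : 1 ≤ l) (hK : (K : Set V).Pairwise E)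
    (hcard : 3 * f < K.card)
    (hin : ∀ v ∉ K, ∃ N ⊆ K, 2 * f < N.card ∧ ∀ u ∈ N, E u v) : CondNC E f l := by
  intro L C R F hpart hL hR hF
  rw [hpart.union_eq_compl, hpart.symm.union_eq_compl]
  obtain ⟨-, -, hLR, hLF, -, -, hRF⟩ := hpart
  by_cases hKL : Disjoint K L
  · exact .inl (arrowL_inducedE_of_disjoint hl hin hF hL hLF hKL)
  by_cases hKR : Disjoint K R
  · exact .inr (arrowL_inducedE_of_disjoint hl hin hF hR hRF hKR)
  exact (lt_card_sdiff_or_lt_card_sdiff hLR hF hcard).imp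
    (arrowL_inducedE_of_pairwise hl hK hLF hKL) (arrowL_inducedE_of_pairwise hl hK hRF hKR)

end CondNC

lemma card_filter_prod_eq_mul {α β : Type*} [Fintype α] [Fintype β] (r : α → β → Prop)
    [∀ a b, Decidable (r a b)] {d : ℕ}
    (h : ∀ b, (Finset.univ.filter fun a => r a b).card = d) :
    (Finset.univ.filter fun p : α × β => r p.1 p.2).card = d * Fintype.card β := by
  simp only [Finset.card_filter] at h ⊢
  simp only [Fintype.sum_prod_type_right, h, Finset.sum_const, Finset.card_univ, smul_eq_mul,
    mul_comm]

/-- The graph on `Fin n` in which the vertices `0, …, 3f` form a clique and every further vertex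
has in-neighbors `0, …, 3f - 1`, with all self-loops. The vertex `max (3f) v` is the last
clique vertex `3f` when `v` is in the clique, and `v` itself otherwise. -/
def coreGraph (f n : ℕ) (u v : Fin n) : Bool :=
  decide (u.val < 3 * f ∨ u.val = max (3 * f) v.val)

namespace coreGraph

variable {f l n : ℕ}

lemma eq_true_iff {u v : Fin n} :
    coreGraph f n u v = true ↔ u.val < 3 * f ∨ u.val = max (3 * f) v.val :=
  decide_eq_true_iff

lemma self (v : Fin n) : coreGraph f n v v = true := by
  rw [eq_true_iff]
  omega

lemma card_inNeighbors (hn : 3 * f + 1 ≤ n) (i : Fin n) :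
    (Finset.univ.filter fun u => coreGraph f n u i = true).card = 3 * f + 1 := by
  have hinsert : (Finset.univ.filter fun u => coreGraph f n u i = true) =
      insert ⟨max (3 * f) i, by omega⟩ (Finset.univ.filter fun u : Fin n => u.val < 3 * f) := by
    ext u
    simp [eq_true_iff, Fin.ext_iff, or_comm]
  rw [hinsert, Finset.card_insert_of_notMem (by simp), Fin.card_filter_val_lt]
  omega

lemma condNC (hf : 1 ≤ f) (hl : 1 ≤ l) (hn : 3 * f + 1 ≤ n) :
    CondNC (fun u v => coreGraph f n u v = true) f l := by
  refine condNC_of_clique (K := Finset.univ.filter fun u => u.val < 3 * f + 1) hl ?_ ?_ ?_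
  · intro u hu v hv _
    have hu : u.val < 3 * f + 1 := by simpa using hu
    have hv : v.val < 3 * f + 1 := by simpa using hv
    rw [eq_true_iff]
    omega
  · rw [Fin.card_filter_val_lt]
    omega
  · refine fun v _ => ⟨Finset.univ.filter fun u => u.val < 3 * f, ?_, ?_, fun u hu => ?_⟩
    · exact Finset.monotone_filter_right _ fun u _ hu => Nat.lt_succ_of_lt hu
    · rw [Fin.card_filter_val_lt]
      omega
    · exact eq_true_iff.2 (.inl (by simpa using hu))

end coreGraph

theorem stmt_2_general (f l n : ℕ) (hf : 1 ≤ f) (hl : 1 ≤ l) (hn : 3 * f + 1 ≤ n) :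
    ∃ E : Fin n → Fin n → Bool,
      (∀ v, E v v = true) ∧
      CondNC (fun u v => E u v = true) f l ∧
      (∀ i : Fin n, (Finset.univ.filter (fun u => E u i = true)).card = 3 * f + 1) ∧
      (Finset.univ.filter (fun p : Fin n × Fin n => E p.1 p.2 = true)).card =
        (3 * f + 1) * n := by
  refine ⟨coreGraph f n, coreGraph.self, coreGraph.condNC hf hl hn,
    coreGraph.card_inNeighbors hn, ?_⟩
  simpa only [Fintype.card_fin] using
    card_filter_prod_eq_mul (fun u v => coreGraph f n u v = true)
      (coreGraph.card_inNeighbors hn)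

/-- For every `n ≥ 4` there is a directed graph on `n` vertices, with a self-loop at every
vertex, satisfying Condition NC with `f = 1` and `l = 1`, in which every vertex has exactly
`4` in-neighbors (including itself) and which has exactly `4n` directed edges. -/
theorem stmt_2 (n : ℕ) (hn : 4 ≤ n) :
    ∃ E : Fin n → Fin n → Bool,
      (∀ v, E v v = true) ∧
      CondNC (fun u v => E u v = true) 1 1 ∧
      (∀ i : Fin n, (Finset.univ.filter (fun u => E u i = true)).card = 4) ∧
      (Finset.univ.filter (fun p : Fin n × Fin n => E p.1 p.2 = true)).card = 4 * n :=
  stmt_2_general 1 1 n le_rfl le_rfl hn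
end

section
/- G satisfies Condition NC for parameters f and l if and only if for every F ⊆ V with |F| ≤ f and every choice of sets C_i ⊆ N_i^{l−} \ {i} with |C_i| ≤ f for each i ∈ V \ F, the associated reduced graph contains exactly one source component. -/
/-- There is a directed path (nonempty list of distinct vertices) of length at most `l`
from `u` to `i` in `E` all of whose vertices avoid the set `Avoid`. -/
def HasPathLe {V : Type} (E : V → V → Prop) (l : ℕ) (Avoid : Finset V) (u i : V) : Prop :=
  ∃ p : List V, p.Chain' E ∧ p.Nodup ∧ p.head? = some u ∧ p.getLast? = some i ∧
    p.length ≤ l + 1 ∧ ∀ v ∈ p, v ∉ Avoid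

/-- Edge relation of the reduced graph associated with `F` and the choice `C`:
an edge `(u, i)` (both outside `F`) whenever there is a directed path of length at most `l`
from `u` to `i` in `G` whose vertices avoid `F ∪ C i`. -/
def reducedEdge {V : Type} [DecidableEq V] (E : V → V → Prop) (l : ℕ) (F : Finset V)
    (C : V → Finset V) : V → V → Prop :=
  fun u i => u ∉ F ∧ i ∉ F ∧ HasPathLe E l (F ∪ C i) u i

/-- The choice `C` is admissible for `F`: for each `i ∉ F`, `C i ⊆ N_i^{l-} \ {i}`
and `|C i| ≤ f`. -/
def AdmissibleC {V : Type} (E : V → V → Prop) (l f : ℕ) (F : Finset V)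
    (C : V → Finset V) : Prop :=
  ∀ i, i ∉ F → (C i).card ≤ f ∧ ∀ u ∈ C i, u ≠ i ∧ HasPathLe E l ∅ u i

/-- `K` is a source component of the directed graph with vertex set `VS` and edge relation
`Rel`: a strongly connected component no vertex outside of which has a directed path to it. -/
def IsSourceComponent {V : Type} (Rel : V → V → Prop) (VS : Finset V) (K : Finset V) : Prop :=
  K.Nonempty ∧ K ⊆ VS ∧
    (∀ u ∈ K, ∀ v ∈ K, Relation.ReflTransGen Rel u v) ∧
    (∀ v ∈ VS, v ∉ K → ∀ u ∈ K, ¬ Relation.ReflTransGen Rel v u)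

/-!
Call a set of vertices predecessor-closed when no edge enters it from outside. The source
components of a finite digraph are its minimal nonempty predecessor-closed sets, so there is exactly
one of them iff the digraph is nonempty and has no two disjoint nonempty predecessor-closed sets.

On the other side, `L ∪ C ⇒_l R` fails in `G_F` iff every vertex of `R` can be cut off from
`L ∪ C` by at most `f` vertices. Letting these cuts be the sets `C_i`, this says that `R` is
predecessor-closed in some reduced graph for `F`. As the in-edges of `i` in the reduced graph depend
only on `C_i`, choices made for two disjoint sets can be glued: Condition NC also says that no
reduced graph has two disjoint nonempty predecessor-closed sets.
-/

section SourceComponents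

variable {V : Type} {Rel : V → V → Prop} {VS A K K' : Finset V}

/-- `A` is predecessor-closed: no edge of `Rel` enters `A` from outside. Disjoint pairs of such sets
are what Condition NC and the uniqueness of the source component both forbid. -/
def IsPredClosed (Rel : V → V → Prop) (A : Finset V) : Prop :=
  ∀ ⦃u v⦄, Rel u v → v ∈ A → u ∈ A

theorem IsPredClosed.mem_of_reflTransGen (hA : IsPredClosed Rel A) {u v : V}
    (huv : Relation.ReflTransGen Rel u v) (hv : v ∈ A) : u ∈ A := by
  induction huv using Relation.ReflTransGen.head_induction_on with
  | refl => exact hv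
  | head hab _ hc => exact hA hab hc

theorem isSourceComponent_of_minimal_isPredClosed
    (hK : Minimal (fun B => IsPredClosed Rel B ∧ B.Nonempty) K) (hKVS : K ⊆ VS) :
    IsSourceComponent Rel VS K := by
  classical
  obtain ⟨hclosed, hne⟩ := hK.prop
  refine ⟨hne, hKVS, fun u hu v hv => ?_,
    fun v _ hvK u hu hvu => hvK (hclosed.mem_of_reflTransGen hvu hu)⟩
  let ancestors := K.filter fun w => Relation.ReflTransGen Rel w v
  have hanc_closed : IsPredClosed Rel ancestors := by
    intro a b hab hb
    obtain ⟨hbK, hbv⟩ := Finset.mem_filter.mp hb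
    exact Finset.mem_filter.mpr ⟨hclosed hab hbK, .head hab hbv⟩
  have hanc_nonempty : ancestors.Nonempty := ⟨v, Finset.mem_filter.mpr ⟨hv, .refl⟩⟩
  have hK_le : K ⊆ ancestors :=
    hK.le_of_le ⟨hanc_closed, hanc_nonempty⟩ (Finset.filter_subset _ _)
  exact (Finset.mem_filter.mp (hK_le hu)).2

theorem IsPredClosed.exists_isSourceComponent_subset (hA : IsPredClosed Rel A)
    (hne : A.Nonempty) (hAVS : A ⊆ VS) : ∃ K ⊆ A, IsSourceComponent Rel VS K := by
  obtain ⟨K, hKA, hK⟩ := exists_minimal_le_of_wellFoundedLT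
    (fun B => IsPredClosed Rel B ∧ B.Nonempty) A ⟨hA, hne⟩
  exact ⟨K, hKA, isSourceComponent_of_minimal_isPredClosed hK (hKA.trans hAVS)⟩

theorem IsSourceComponent.isPredClosed (hK : IsSourceComponent Rel VS K)
    (hVS : ∀ ⦃u v⦄, Rel u v → u ∈ VS) : IsPredClosed Rel K := by
  intro u v huv hv
  by_contra hu
  exact hK.2.2.2 u (hVS huv) hu v hv (.single huv)

theorem IsSourceComponent.subset_of_not_disjoint (hK : IsSourceComponent Rel VS K)
    (hK' : IsSourceComponent Rel VS K') (h : ¬ Disjoint K K') : K ⊆ K' := by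
  obtain ⟨u, huK, huK'⟩ := Finset.not_disjoint_iff.mp h
  intro v hv
  by_contra hvK'
  exact hK'.2.2.2 v (hK.2.1 hv) hvK' u huK' (hK.2.2.1 v hv u huK)

theorem IsSourceComponent.eq_of_not_disjoint (hK : IsSourceComponent Rel VS K)
    (hK' : IsSourceComponent Rel VS K') (h : ¬ Disjoint K K') : K = K' :=
  (hK.subset_of_not_disjoint hK' h).antisymm
    (hK'.subset_of_not_disjoint hK fun h' => h h'.symm)

theorem existsUnique_isSourceComponent_iff (hVS : ∀ ⦃u v⦄, Rel u v → u ∈ VS) :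
    (∃! K, IsSourceComponent Rel VS K) ↔
      VS.Nonempty ∧ ∀ L R : Finset V, L ⊆ VS → R ⊆ VS → L.Nonempty → R.Nonempty →
        Disjoint L R → ¬ (IsPredClosed Rel L ∧ IsPredClosed Rel R) := by
  constructor
  · intro hunique
    obtain ⟨K, hK⟩ := hunique.exists
    refine ⟨hK.1.mono hK.2.1, fun L R hL hR hLne hRne hLR ⟨hLcl, hRcl⟩ => ?_⟩
    obtain ⟨K₁, hK₁L, hK₁⟩ := hLcl.exists_isSourceComponent_subset hLne hL
    obtain ⟨K₂, hK₂R, hK₂⟩ := hRcl.exists_isSourceComponent_subset hRne hR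
    obtain rfl : K₁ = K₂ := hunique.unique hK₁ hK₂
    obtain ⟨u, hu⟩ := hK₁.1
    exact Finset.disjoint_left.mp hLR (hK₁L hu) (hK₂R hu)
  · rintro ⟨hne, hmeet⟩
    have hVS_closed : IsPredClosed Rel VS := fun _ _ huv _ => hVS huv
    obtain ⟨K, -, hK⟩ := hVS_closed.exists_isSourceComponent_subset hne subset_rfl
    refine ⟨K, hK, fun K' hK' => hK'.eq_of_not_disjoint hK fun hdisj => ?_⟩
    exact hmeet K' K hK'.2.1 hK.2.1 hK'.1 hK.1 hdisj ⟨hK'.isPredClosed hVS, hK.isPredClosed hVS⟩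

end SourceComponents

section Paths

variable {V : Type} {E : V → V → Prop} {l : ℕ} {A F S : Finset V} {p : List V} {i u v : V}

theorem isChain_cons_inducedE_iff (hu : u ∉ F) :
    (u :: p).IsChain (inducedE E F) ↔ (u :: p).IsChain E ∧ ∀ v ∈ u :: p, v ∉ F := by
  induction p generalizing u with
  | nil => simpa using hu
  | cons w t ih =>
    by_cases hw : w ∈ F
    · simp [inducedE, hw]
    · rw [List.isChain_cons_cons, List.isChain_cons_cons, ih hw, List.forall_mem_cons (a := u)]
      simp only [inducedE, hu, hw, not_false_eq_true, true_and, and_assoc]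

theorem isWxPath_inducedE_iff (hA : Disjoint A F) :
    IsWxPath (inducedE E F) l A i p ↔ IsWxPath E l A i p ∧ ∀ v ∈ p, v ∉ F := by
  cases p with
  | nil => simp [IsWxPath]
  | cons w t =>
    by_cases hw : w ∈ A
    · have hchain := isChain_cons_inducedE_iff (E := E) (p := t) (Finset.disjoint_left.mp hA hw)
      constructor
      · rintro ⟨hind, hrest⟩
        exact ⟨⟨(hchain.mp hind).1, hrest⟩, (hchain.mp hind).2⟩
      · rintro ⟨⟨hE, hrest⟩, hF⟩
        exact ⟨hchain.mpr ⟨hE, hF⟩, hrest⟩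
    · simp [IsWxPath, hw]

theorem HasPathLe.of_mem_path (hchain : p.IsChain E) (hnodup : p.Nodup)
    (hlast : p.getLast? = some i) (hlen : p.length ≤ l + 1) (hv : v ∈ p) : HasPathLe E l ∅ v i := by
  obtain ⟨s, t, rfl⟩ := List.append_of_mem hv
  rw [List.getLast?_append_cons] at hlast
  have hlen' : (v :: t).length ≤ l + 1 := (List.suffix_append s _).length_le.trans hlen
  exact ⟨v :: t, hchain.right_of_append, hnodup.of_append_right, rfl, hlast, hlen', by simp⟩

theorem IsCut.filter_hasPathLe [DecidablePred fun u => HasPathLe E l ∅ u i]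
    (hS : IsCut (inducedE E F) l A i S) :
    IsCut (inducedE E F) l A i (S.filter fun u => HasPathLe E l ∅ u i) := by
  refine ⟨fun hi => hS.1 (Finset.mem_of_mem_filter i hi), fun p hp => ?_⟩
  obtain ⟨s, hsS, hsp⟩ := hS.2 p hp
  obtain ⟨hchain, hnodup, -, hlast, hlen⟩ := hp
  have hchainE : p.IsChain E := List.IsChain.imp (fun _ _ h => h.2.2) hchain
  exact ⟨s, Finset.mem_filter.mpr ⟨hsS, .of_mem_path hchainE hnodup hlast hlen hsp⟩, hsp⟩

theorem isCut_inducedE_iff [DecidableEq V] (hA : Disjoint A F) :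
    IsCut (inducedE E F) l A i S ↔ i ∉ S ∧ ∀ a ∈ A, ¬ HasPathLe E l (F ∪ S) a i := by
  refine and_congr_right fun _ => ⟨?_, ?_⟩
  · rintro hcut a ha ⟨p, hchain, hnodup, hhead, hlast, hlen, havoid⟩
    simp only [Finset.mem_union, not_or] at havoid
    obtain ⟨s, hsS, hsp⟩ := hcut p <| (isWxPath_inducedE_iff hA).mpr
      ⟨⟨hchain, hnodup, ⟨a, ha, hhead⟩, hlast, hlen⟩, fun v hv => (havoid v hv).1⟩
    exact (havoid s hsp).2 hsS
  · intro hno p hp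
    obtain ⟨⟨hchain, hnodup, ⟨a, ha, hhead⟩, hlast, hlen⟩, hF⟩ := (isWxPath_inducedE_iff hA).mp hp
    by_contra! hS
    refine hno a ha ⟨p, hchain, hnodup, hhead, hlast, hlen, fun v hv hvFS => ?_⟩
    exact (Finset.mem_union.mp hvFS).elim (hF v hv) fun hvS => hS v hvS hv

theorem isCut_self_of_notMem (hi : i ∉ A) : IsCut E l A i A := by
  refine ⟨hi, ?_⟩
  rintro p ⟨-, -, ⟨a, ha, hhead⟩, -⟩
  exact ⟨a, ha, List.mem_of_mem_head? hhead⟩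

end Paths

section ReducedGraphs

variable {V : Type} {E : V → V → Prop} {f l : ℕ} {A B F : Finset V}

theorem ArrowL.lt_card (h : ArrowL E f l A B) (hAB : Disjoint A B) : f < A.card := by
  obtain ⟨i, hiB, hi⟩ := h
  exact hi A (isCut_self_of_notMem (Finset.disjoint_right.mp hAB hiB))

variable [DecidableEq V] {C D : V → Finset V}

theorem AdmissibleC.piecewise (hC : AdmissibleC E l f F C) (hD : AdmissibleC E l f F D) :
    AdmissibleC E l f F (B.piecewise C D) := fun i hi =>
  B.piecewise_cases C D (fun S => S.card ≤ f ∧ ∀ u ∈ S, u ≠ i ∧ HasPathLe E l ∅ u i)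
    (hC i hi) (hD i hi)

theorem IsPredClosed.reducedEdge_congr (hB : IsPredClosed (reducedEdge E l F C) B)
    (hCD : ∀ i ∈ B, C i = D i) : IsPredClosed (reducedEdge E l F D) B := by
  rintro u i ⟨hu, hi, hpath⟩ hiB
  exact hB ⟨hu, hi, hCD i hiB ▸ hpath⟩ hiB

theorem ArrowL.exists_reducedEdge (h : ArrowL (inducedE E F) f l A B) (hA : Disjoint A F)
    (hB : Disjoint B F) (hC : AdmissibleC E l f F C) :
    ∃ a ∈ A, ∃ i ∈ B, reducedEdge E l F C a i := by
  obtain ⟨i, hiB, hi⟩ := h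
  have hiF := Finset.disjoint_left.mp hB hiB
  obtain ⟨hcard, hmem⟩ := hC i hiF
  have hnotcut : ¬ IsCut (inducedE E F) l A i (C i) := fun hcut => by
    have := hi (C i) hcut
    omega
  have hiC : i ∉ C i := fun hi => (hmem i hi).1 rfl
  rw [isCut_inducedE_iff hA] at hnotcut
  push Not at hnotcut
  obtain ⟨a, haA, hpath⟩ := hnotcut hiC
  exact ⟨a, haA, i, hiB, Finset.disjoint_left.mp hA haA, hiF, hpath⟩

theorem exists_admissibleC_of_not_arrowL (h : ¬ ArrowL (inducedE E F) f l A B)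
    (hA : Disjoint A F) :
    ∃ C, AdmissibleC E l f F C ∧ ∀ a ∈ A, ∀ i ∈ B, ¬ reducedEdge E l F C a i := by
  classical
  unfold ArrowL at h
  push Not at h
  choose! S hcut hcard using h
  let ancestorCut : V → Finset V := fun i => (S i).filter fun u => HasPathLe E l ∅ u i
  have hcut' (i) (hi : i ∈ B) : IsCut (inducedE E F) l A i (ancestorCut i) :=
    (hcut i hi).filter_hasPathLe
  refine ⟨B.piecewise ancestorCut fun _ => ∅, fun i _ => ?_, fun a ha i hi hedge => ?_⟩
  · by_cases hi : i ∈ B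
    · rw [B.piecewise_eq_of_mem _ _ hi]
      refine ⟨(Finset.card_filter_le _ _).trans (Nat.le_of_lt_succ (hcard i hi)), fun u hu => ?_⟩
      exact ⟨fun hui => (hcut' i hi).1 (hui ▸ hu), (Finset.mem_filter.mp hu).2⟩
    · simp [hi]
  · have hpath := hedge.2.2
    rw [B.piecewise_eq_of_mem _ _ hi] at hpath
    exact ((isCut_inducedE_iff hA).mp (hcut' i hi)).2 a ha hpath

theorem arrowL_inducedE_iff (hA : Disjoint A F) (hB : Disjoint B F) :
    ArrowL (inducedE E F) f l A B ↔
      ∀ C, AdmissibleC E l f F C → ∃ a ∈ A, ∃ i ∈ B, reducedEdge E l F C a i := by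
  refine ⟨fun h C hC => h.exists_reducedEdge hA hB hC, fun h => ?_⟩
  by_contra hnot
  obtain ⟨C, hC, hno⟩ := exists_admissibleC_of_not_arrowL hnot hA
  obtain ⟨a, ha, i, hi, hedge⟩ := h C hC
  exact hno a ha i hi hedge

variable [Fintype V]

theorem arrowL_compl_iff (hB : Disjoint B F) :
    ArrowL (inducedE E F) f l (B ∪ F)ᶜ B ↔
      ∀ C, AdmissibleC E l f F C → ¬ IsPredClosed (reducedEdge E l F C) B := by
  have hcompl : Disjoint (B ∪ F)ᶜ F :=
    disjoint_compl_left.mono_right Finset.subset_union_right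
  rw [arrowL_inducedE_iff hcompl hB]
  refine forall₂_congr fun C _ => ?_
  unfold IsPredClosed
  push Not
  constructor
  · rintro ⟨a, ha, i, hi, hedge⟩
    exact ⟨a, i, hedge, hi, fun haB => Finset.mem_compl.mp ha (Finset.mem_union_left F haB)⟩
  · rintro ⟨a, i, hedge, hi, ha⟩
    exact ⟨a, by simp [ha, hedge.1], i, hi, hedge⟩

theorem arrowL_compl_or_iff {L R : Finset V} (hLR : Disjoint L R) (hL : L ⊆ Fᶜ) (hR : R ⊆ Fᶜ) :
    (ArrowL (inducedE E F) f l (L ∪ F)ᶜ L ∨ ArrowL (inducedE E F) f l (R ∪ F)ᶜ R) ↔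
      ∀ C, AdmissibleC E l f F C →
        ¬ (IsPredClosed (reducedEdge E l F C) L ∧ IsPredClosed (reducedEdge E l F C) R) := by
  rw [Finset.subset_compl_iff_disjoint_right] at hL hR
  rw [arrowL_compl_iff hL, arrowL_compl_iff hR]
  constructor
  · rintro (h | h) C hC ⟨hLcl, hRcl⟩
    exacts [h C hC hLcl, h C hC hRcl]
  · intro h
    by_contra! hno
    obtain ⟨⟨C, hC, hLcl⟩, D, hD, hRcl⟩ := hno
    refine h (L.piecewise C D) (hC.piecewise hD) ⟨?_, ?_⟩
    · exact hLcl.reducedEdge_congr fun i hi => (L.piecewise_eq_of_mem C D hi).symm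
    · exact hRcl.reducedEdge_congr fun i hi =>
        (L.piecewise_eq_of_notMem C D (Finset.disjoint_right.mp hLR hi)).symm

end ReducedGraphs

section ConditionNC

variable {V : Type} [Fintype V] [DecidableEq V] {E : V → V → Prop} {f l : ℕ}

theorem isPartition4_iff {L C R F : Finset V} :
    IsPartition4 L C R F ↔
      C = (L ∪ R ∪ F)ᶜ ∧ Disjoint L R ∧ Disjoint L F ∧ Disjoint R F := by
  simp only [IsPartition4, Finset.ext_iff, Finset.disjoint_left, Finset.mem_union,
    Finset.mem_compl, Finset.mem_univ]
  grind

theorem condNC_iff_arrowL_compl :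
    CondNC E f l ↔ ∀ F : Finset V, F.card ≤ f → ∀ L R : Finset V, L ⊆ Fᶜ → R ⊆ Fᶜ →
      L.Nonempty → R.Nonempty → Disjoint L R →
        ArrowL (inducedE E F) f l (L ∪ F)ᶜ L ∨ ArrowL (inducedE E F) f l (R ∪ F)ᶜ R := by
  have union_compl {L R F : Finset V} (hLR : Disjoint L R) (hR : Disjoint R F) :
      R ∪ (L ∪ R ∪ F)ᶜ = (L ∪ F)ᶜ := by
    simp only [Finset.disjoint_left, Finset.ext_iff, Finset.mem_union, Finset.mem_compl] at *
    grind
  simp only [CondNC, isPartition4_iff, Finset.subset_compl_iff_disjoint_right]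
  constructor
  · intro h F hF L R hL hR hLne hRne hLR
    have := h L _ R F ⟨rfl, hLR, hL, hR⟩ hLne hRne hF
    rwa [union_compl hLR hR, Finset.union_comm L R, union_compl hLR.symm hL] at this
  · rintro h L _ R F ⟨rfl, hLR, hL, hR⟩ hLne hRne hF
    rw [union_compl hLR hR, Finset.union_comm L R, union_compl hLR.symm hL]
    exact h F hF L R hL hR hLne hRne hLR

theorem condNC_iff_isPredClosed :
    CondNC E f l ↔ ∀ F : Finset V, F.card ≤ f → ∀ C, AdmissibleC E l f F C →
      ∀ L R : Finset V, L ⊆ Fᶜ → R ⊆ Fᶜ → L.Nonempty → R.Nonempty → Disjoint L R →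
        ¬ (IsPredClosed (reducedEdge E l F C) L ∧ IsPredClosed (reducedEdge E l F C) R) := by
  rw [condNC_iff_arrowL_compl]
  refine forall₂_congr fun F _ => ⟨fun h C hC L R hL hR hLne hRne hLR => ?_,
    fun h L R hL hR hLne hRne hLR => ?_⟩
  · exact (arrowL_compl_or_iff hLR hL hR).mp (h L R hL hR hLne hRne hLR) C hC
  · exact (arrowL_compl_or_iff hLR hL hR).mpr fun C hC => h C hC L R hL hR hLne hRne hLR

theorem CondNC.lt_card [Nontrivial V] (h : CondNC E f l) : f < Fintype.card V := by
  obtain ⟨a, b, hab⟩ := exists_pair_ne V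
  have hor := condNC_iff_arrowL_compl.mp h ∅ (Nat.zero_le f) {a} {b} (by simp) (by simp)
    (Finset.singleton_nonempty a) (Finset.singleton_nonempty b) (by simpa using hab)
  simp only [Finset.union_empty] at hor
  rcases hor with harrow | harrow <;>
    exact (harrow.lt_card disjoint_compl_left).trans_le (Finset.card_le_univ _)

end ConditionNC

theorem stmt_3_general {V : Type} [Fintype V] [DecidableEq V] [Nontrivial V]
    (E : V → V → Prop) (f l : ℕ) :
    CondNC E f l ↔
      ∀ F : Finset V, F.card ≤ f → ∀ C : V → Finset V, AdmissibleC E l f F C →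
        ∃! K : Finset V,
          IsSourceComponent (reducedEdge E l F C) (Finset.univ \ F) K := by
  have hunique (F : Finset V) (C : V → Finset V) :=
    existsUnique_isSourceComponent_iff (Rel := reducedEdge E l F C) (VS := Fᶜ)
      fun _ _ hedge => Finset.mem_compl.mpr hedge.1
  simp only [← Finset.compl_eq_univ_sdiff, hunique]
  constructor
  · intro hNC F hF C hC
    obtain ⟨v, -, hv⟩ := Finset.exists_mem_notMem_of_card_lt_card (hF.trans_lt hNC.lt_card)
    exact ⟨⟨v, Finset.mem_compl.mpr hv⟩, condNC_iff_isPredClosed.mp hNC F hF C hC⟩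
  · exact fun h => condNC_iff_isPredClosed.mpr fun F hF C hC => (h F hF C hC).2

/-- `G` satisfies Condition NC iff for every `F` with `|F| ≤ f` and every admissible choice
of the sets `C_i`, the associated reduced graph contains exactly one source component. -/
theorem stmt_3 {V : Type} [Fintype V] [DecidableEq V] (E : V → V → Prop)
    (hself : ∀ v, E v v) (hn : 2 ≤ Fintype.card V) (f l : ℕ) (hl : 1 ≤ l) :
    CondNC E f l ↔
      ∀ F : Finset V, F.card ≤ f → ∀ C : V → Finset V, AdmissibleC E l f F C →
        ∃! K : Finset V,
          IsSourceComponent (reducedEdge E l F C) (Finset.univ \ F) K :=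
  have : Nontrivial V := Fintype.one_lt_card_iff_nontrivial.mp hn
  stmt_3_general E f l
end

section
/- If G satisfies Condition NC for parameters f and l (for any l ≥ 1), then G satisfies Condition 1 for parameter f. -/
/-- Condition 1 (for parameter `f`): for every partition `L, C, R, F` of the vertex set with
`L, R` nonempty and `|F| ≤ f`, either `L ∪ C` contains at least `f + 1` distinct in-neighbors
of `R`, or `R ∪ C` contains at least `f + 1` distinct in-neighbors of `L`. -/
def Cond1 {V : Type} [Fintype V] [DecidableEq V] (E : V → V → Prop) [DecidableRel E]
    (f : ℕ) : Prop :=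
  ∀ L C R F : Finset V, IsPartition4 L C R F → L.Nonempty → R.Nonempty → F.card ≤ f →
    f + 1 ≤ ((L ∪ C).filter (fun u => ∃ v ∈ R, E u v)).card ∨
    f + 1 ≤ ((R ∪ C).filter (fun u => ∃ v ∈ L, E u v)).card

/-!
Suppose disjoint sets `A` and `B` cover the vertices of `G_F`. A path in `G_F` from `A` to a vertex
of `B` leaves `A` along some edge into `B`, so it meets the set of vertices of `A` with an edge into
`B`. That set is therefore an `l`-restricted cut for every target in `B`, whatever `l` is, and
`A ⇒_l B` forces it to have at least `f + 1` elements.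
-/

section Cut

variable {V : Type} {E : V → V → Prop} {f l : ℕ}

theorem IsWxPath.mem_of_forall_adj {U : Set V} {W : Finset V} {x : V} {p : List V}
    (hp : IsWxPath E l W x p) (hWU : ↑W ⊆ U)
    (hstep : ∀ u ∈ p, ∀ v ∈ p, E u v → u ∈ U → v ∈ U) : x ∈ U := by
  obtain ⟨hchain, -, ⟨w, hwW, hhead⟩, hlast, -⟩ := hp
  have hchainU : p.IsChain fun u v ↦ u ∈ U → v ∈ U :=
    hchain.imp_of_mem_imp fun u v hu hv huv ↦ hstep u hu v hv huv
  have hheadU (hne : p ≠ []) : p.head hne ∈ U := by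
    rw [(List.head_eq_iff_head?_eq_some hne).mpr hhead]
    exact hWU hwW
  exact hchainU.induction (· ∈ U) p (fun _ _ h ↦ h) hheadU x (List.mem_of_getLast? hlast)

theorem isCut_of_forall_crossing_mem {U : Set V} {W S : Finset V} {x : V}
    (hWU : ↑W ⊆ U) (hxU : x ∉ U) (hxS : x ∉ S)
    (hcross : ∀ u ∈ U, ∀ v ∉ U, E u v → u ∈ S ∨ v ∈ S) : IsCut E l W x S := by
  refine ⟨hxS, fun p hp ↦ ?_⟩
  by_contra! havoid
  refine hxU (hp.mem_of_forall_adj hWU fun u hu v hv huv huU ↦ ?_)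
  by_contra hvU
  exact (hcross u huU v hvU huv).elim (havoid u · hu) (havoid v · hv)

theorem ArrowL.le_card_of_forall_crossing_mem {A B S : Finset V} (h : ArrowL E f l A B)
    (hAB : Disjoint A B) (hSB : Disjoint S B)
    (hcross : ∀ u ∈ A, ∀ v ∉ A, E u v → u ∈ S ∨ v ∈ S) : f + 1 ≤ S.card := by
  obtain ⟨i, hiB, hi⟩ := h
  exact hi S <| isCut_of_forall_crossing_mem (U := A) subset_rfl
    (Finset.disjoint_right.mp hAB hiB) (Finset.disjoint_right.mp hSB hiB) hcross

theorem ArrowL.le_card_inNeighbors [DecidableEq V] [DecidableRel E] {A B F : Finset V}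
    (h : ArrowL (inducedE E F) f l A B) (hAB : Disjoint A B) (hcover : ∀ v ∉ F, v ∈ A ∪ B) :
    f + 1 ≤ (A.filter fun u ↦ ∃ v ∈ B, E u v).card := by
  refine h.le_card_of_forall_crossing_mem hAB (hAB.mono_left (Finset.filter_subset _ _)) ?_
  rintro u huA v hvA ⟨-, hvF, huv⟩
  have hvB : v ∈ B := (Finset.mem_union.mp (hcover v hvF)).resolve_left hvA
  exact .inl (Finset.mem_filter.mpr ⟨huA, v, hvB, huv⟩)

end Cut

namespace IsPartition4

variable {V : Type} [Fintype V] [DecidableEq V] {L C R F : Finset V}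

theorem swap (h : IsPartition4 L C R F) : IsPartition4 R C L F := by
  obtain ⟨hcover, hLC, hLR, hLF, hCR, hCF, hRF⟩ := h
  refine ⟨?_, hCR.symm, hLR.symm, hRF, hLC.symm, hCF, hLF⟩
  rw [← hcover, Finset.union_comm L C, Finset.union_comm (C ∪ L) R, Finset.union_assoc R C L]

theorem disjoint_union_left (h : IsPartition4 L C R F) : Disjoint (L ∪ C) R := by
  obtain ⟨-, -, hLR, -, hCR, -, -⟩ := h
  exact Finset.disjoint_union_left.mpr ⟨hLR, hCR⟩

theorem mem_union_of_notMem (h : IsPartition4 L C R F) (v : V) (hv : v ∉ F) :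
    v ∈ L ∪ C ∪ R :=
  (Finset.mem_union.mp (h.1 ▸ Finset.mem_univ v)).resolve_right hv

theorem le_card_inNeighbors {E : V → V → Prop} [DecidableRel E] {f l : ℕ}
    (h : IsPartition4 L C R F) (hArrow : ArrowL (inducedE E F) f l (L ∪ C) R) :
    f + 1 ≤ ((L ∪ C).filter fun u ↦ ∃ v ∈ R, E u v).card :=
  hArrow.le_card_inNeighbors h.disjoint_union_left h.mem_union_of_notMem

end IsPartition4

/-- If `G` satisfies Condition NC for parameters `f` and `l` (any `l ≥ 1`), then `G`
satisfies Condition 1 for parameter `f`. -/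
theorem stmt_11 {V : Type} [Fintype V] [DecidableEq V] (E : V → V → Prop) [DecidableRel E]
    (hself : ∀ v, E v v) (hn : 2 ≤ Fintype.card V) (f l : ℕ) (hl : 1 ≤ l)
    (hNC : CondNC E f l) :
    Cond1 E f := by
  intro L C R F hPart hL hR hF
  exact (hNC L C R F hPart hL hR hF).symm.imp hPart.le_card_inNeighbors
    hPart.swap.le_card_inNeighbors
end

section
/- Let N ≥ 1 and τ ≥ 1 be integers, and let A_1, …, A_τ be N×N real matrices with nonnegative entries such that each A_j has all diagonal entries positive, and such that for each j the matrix power A_j^N has some column with all entries positive. Then for every sequence H_1, …, H_{τN} of matrices with each H_t ∈ {A_1, …, A_τ}, the product H_1 H_2 ⋯ H_{τN} has some column with all entries positive. -/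
/-!
If `A` is nonnegative with positive diagonal, multiplying by `A` never destroys a positive entry.
Hence the positive entries of a subproduct of such matrices remain positive in the full product.
By the pigeonhole principle some `A j` occurs often enough among the factors for its power to be
a subproduct, and a positive column of that power is a positive column of the whole product.
-/

section PositiveEntries

variable {l m n R : Type*} [Fintype m] [Semiring R] [PartialOrder R]

lemma mul_apply_nonneg [IsOrderedRing R] {A : Matrix l m R} {B : Matrix m n R}
    (hA : ∀ i j, 0 ≤ A i j) (hB : ∀ i j, 0 ≤ B i j) (i : l) (j : n) : 0 ≤ (A * B) i j := by
  rw [Matrix.mul_apply]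
  exact Finset.sum_nonneg fun k _ => mul_nonneg (hA i k) (hB k j)

lemma mul_apply_pos_iff_of_nonneg [IsStrictOrderedRing R] {A : Matrix l m R}
    {B : Matrix m n R} (hA : ∀ i j, 0 ≤ A i j) (hB : ∀ i j, 0 ≤ B i j) {i : l} {j : n} :
    0 < (A * B) i j ↔ ∃ k, 0 < A i k ∧ 0 < B k j := by
  rw [Matrix.mul_apply, Finset.sum_pos_iff_of_nonneg fun k _ => mul_nonneg (hA i k) (hB k j)]
  constructor
  · rintro ⟨k, -, hk⟩
    exact ⟨k, (hA i k).lt_of_ne' (left_ne_zero_of_mul hk.ne'),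
      (hB k j).lt_of_ne' (right_ne_zero_of_mul hk.ne')⟩
  · rintro ⟨k, hAk, hBk⟩
    exact ⟨k, Finset.mem_univ k, mul_pos hAk hBk⟩

variable [Fintype n] [DecidableEq n]

lemma list_prod_apply_nonneg [IsOrderedRing R] {L : List (Matrix n n R)}
    (hL : ∀ M ∈ L, ∀ i j, 0 ≤ M i j) : ∀ i j, 0 ≤ L.prod i j := by
  refine List.prod_induction (fun M : Matrix n n R => ∀ i j, 0 ≤ M i j)
    (fun _ _ => mul_apply_nonneg) ?_ hL
  intro i j
  rw [Matrix.one_apply]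
  split_ifs
  exacts [zero_le_one, le_rfl]

lemma list_prod_apply_pos_of_sublist [IsStrictOrderedRing R] {K L : List (Matrix n n R)}
    (h : K.Sublist L) (hL : ∀ M ∈ L, ∀ i j, 0 ≤ M i j) (hdiag : ∀ M ∈ L, ∀ i, 0 < M i i) {i j : n}
    (hpos : 0 < K.prod i j) : 0 < L.prod i j := by
  induction h generalizing i with
  | slnil => exact hpos
  | @cons K L M _ ih =>
    rw [List.forall_mem_cons] at hL hdiag
    rw [List.prod_cons, mul_apply_pos_iff_of_nonneg hL.1 (list_prod_apply_nonneg hL.2)]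
    exact ⟨i, hdiag.1 i, ih hL.2 hdiag.2 hpos⟩
  | @cons_cons K L M hsub ih =>
    rw [List.forall_mem_cons] at hL hdiag
    have hK : ∀ M ∈ K, ∀ i j, 0 ≤ M i j := fun M hM => hL.2 M (hsub.subset hM)
    rw [List.prod_cons, mul_apply_pos_iff_of_nonneg hL.1 (list_prod_apply_nonneg hK)] at hpos
    rw [List.prod_cons, mul_apply_pos_iff_of_nonneg hL.1 (list_prod_apply_nonneg hL.2)]
    obtain ⟨k, hM, hk⟩ := hpos
    exact ⟨k, hM, ih hL.2 hdiag.2 hk⟩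

end PositiveEntries

-- The bound is `∑ j, (k j - 1) < l.length`, written without truncated subtraction.
lemma exists_le_count_of_sum_lt_length_add_card {ι : Type*} [Fintype ι] [DecidableEq ι]
    {k : ι → ℕ} {l : List ι} (h : ∑ j, k j < l.length + Fintype.card ι) :
    ∃ j, k j ≤ l.count j := by
  have hcount : ∑ j, l.count j = l.length := by
    simpa only [Multiset.coe_count, Multiset.coe_card] using
      Multiset.sum_count_eq_card (m := (l : Multiset ι)) fun j _ => Finset.mem_univ j
  by_contra! hlt
  have hle : ∑ j, (l.count j + 1) ≤ ∑ j, k j := Finset.sum_le_sum fun j _ => hlt j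
  rw [Finset.sum_add_distrib, hcount, ← Fintype.card_eq_sum_ones] at hle
  exact hle.not_gt h

theorem stmt_13_general {ι n R : Type*} [Fintype ι] [Fintype n] [DecidableEq n]
    [Semiring R] [PartialOrder R] [IsStrictOrderedRing R]
    (A : ι → Matrix n n R)
    (hnn : ∀ j r c, 0 ≤ A j r c)
    (hdiag : ∀ j r, 0 < A j r r)
    (k : ι → ℕ)
    (hcol : ∀ j, ∃ c, ∀ r, 0 < (A j ^ k j) r c)
    {m : ℕ} (hm : ∑ j, k j < m + Fintype.card ι)
    (H : Fin m → Matrix n n R)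
    (hH : ∀ t, ∃ j, H t = A j) :
    ∃ c, ∀ r, 0 < (List.ofFn H).prod r c := by
  classical
  choose f hf using hH
  obtain rfl : H = A ∘ f := funext hf
  obtain ⟨j, hj⟩ : ∃ j, k j ≤ (List.ofFn f).count j :=
    exists_le_count_of_sum_lt_length_add_card (by rwa [List.length_ofFn])
  have hsub : (List.replicate (k j) (A j)).Sublist (List.ofFn (A ∘ f)) := by
    rw [← List.map_replicate, ← List.map_ofFn]
    exact (List.replicate_sublist_iff.2 hj).map A
  obtain ⟨c, hc⟩ := hcol j
  refine ⟨c, fun r => list_prod_apply_pos_of_sublist hsub ?_ ?_ ?_⟩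
  · exact List.forall_mem_ofFn_iff.2 fun t => hnn (f t)
  · exact List.forall_mem_ofFn_iff.2 fun t => hdiag (f t)
  · rw [List.prod_replicate]
    exact hc r

/-- Let `A_1, …, A_τ` be `N × N` nonnegative matrices with positive diagonals such that each
`A_j ^ N` has an all-positive column. Then any product of `τN` matrices, each drawn from
`{A_1, …, A_τ}`, has an all-positive column. -/
theorem stmt_13 (N τ : ℕ) (hN : 1 ≤ N) (hτ : 1 ≤ τ)
    (A : Fin τ → Matrix (Fin N) (Fin N) ℝ)
    (hnn : ∀ j r c, 0 ≤ A j r c)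
    (hdiag : ∀ j r, 0 < A j r r)
    (hcol : ∀ j, ∃ c, ∀ r, 0 < (A j ^ N) r c)
    (H : Fin (τ * N) → Matrix (Fin N) (Fin N) ℝ)
    (hH : ∀ t, ∃ j, H t = A j) :
    ∃ c, ∀ r, 0 < (List.ofFn H).prod r c := by
  have hlength : ∑ _j : Fin τ, N < τ * N + Fintype.card (Fin τ) := by
    simp [Nat.succ_le_iff.1 hτ]
  exact stmt_13_general A hnn hdiag (fun _ => N) hcol hlength H hH
end

section
/- Let N ≥ 1 and τ ≥ 1 be integers and 0 < β ≤ 1. Let A_1, …, A_τ be N×N matrices whose entries are all 0 or 1, each with all diagonal entries equal to 1, and such that for each j the matrix power A_j^N has some column with all entries positive. Let M_1, …, M_{τN} be N×N row-stochastic matrices such that for every t there exists j(t) with M_t ≥ β·A_{j(t)} entrywise. Then the product Q = M_1 M_2 ⋯ M_{τN} is a row-stochastic scrambling matrix with λ(Q) ≤ 1 − β^{τN} < 1. -/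
/-- An `N × N` real matrix is row stochastic if its entries are nonnegative and each of its
rows sums to 1. -/
def RowStochastic {N : ℕ} (Q : Matrix (Fin N) (Fin N) ℝ) : Prop :=
  (∀ r c, 0 ≤ Q r c) ∧ ∀ r, ∑ c, Q r c = 1

/-- The coefficient of ergodicity `λ(Q) = 1 - min_{i₁,i₂} ∑_j min (Q i₁ j) (Q i₂ j)`. -/
noncomputable def ergLam {N : ℕ} (Q : Matrix (Fin N) (Fin N) ℝ) : ℝ :=
  1 - ⨅ p : Fin N × Fin N, ∑ j, min (Q p.1 j) (Q p.2 j)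

/-! Let `j(t)` be an index with `M_t ≥ β A_{j(t)}`. The product of the `M_t` dominates `β ^ (τ N)`
times the product of the `A_{j(t)}`, and by the pigeonhole principle some index `j` occurs at least
`N` times in the latter. Since each `A_{j(t)}` dominates the identity matrix, deleting factors only
decreases the product, so it dominates `A_j ^ N`. The entries of `A_j ^ N`, like those of `A_j`,
lie in the semiring `{0} ∪ [1, ∞)`, so its positive column is at least `1`. The corresponding column
of the product of the `M_t` is then at least `β ^ (τ N)`, and so is the overlap of any two rows. -/

/-- The entrywise order on matrices, as a plain relation: the order that Mathlib provides on
matrices is the Loewner order. -/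
def EntrywiseLE {m n R : Type*} [LE R] (X Y : Matrix m n R) : Prop :=
  ∀ i j, X i j ≤ Y i j

local infix:50 " ≤ₑ " => EntrywiseLE

namespace EntrywiseLE

section Preorder

variable {m n R : Type*} [Preorder R] {X Y Z : Matrix m n R}

lemma refl (X : Matrix m n R) : X ≤ₑ X := fun _ _ => le_rfl

lemma trans (hXY : X ≤ₑ Y) (hYZ : Y ≤ₑ Z) : X ≤ₑ Z := fun i j => (hXY i j).trans (hYZ i j)

end Preorder

section ZeroOne

variable {n R : Type*} [DecidableEq n] [Zero R] [One R] [Preorder R]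

lemma zero_le_one [ZeroLEOneClass R] : (0 : Matrix n n R) ≤ₑ 1 := fun i j => by
  rw [Matrix.zero_apply, Matrix.one_apply]
  split_ifs <;> simp

lemma one_le_of_one_le_diag {X : Matrix n n R} (hX : 0 ≤ₑ X) (hdiag : ∀ i, 1 ≤ X i i) :
    1 ≤ₑ X := fun i j => by
  rw [Matrix.one_apply]
  split_ifs with hij
  · exact hij ▸ hdiag i
  · exact hX i j

end ZeroOne

section Semiring

variable {R : Type*} [Semiring R] [PartialOrder R] [IsOrderedRing R]

lemma smul {m n : Type*} {X Y : Matrix m n R} {a : R} (ha : 0 ≤ a) (hXY : X ≤ₑ Y) :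
    a • X ≤ₑ a • Y :=
  fun i j => mul_le_mul_of_nonneg_left (hXY i j) ha

lemma mul {l m n : Type*} [Fintype m] {X X' : Matrix l m R} {Y Y' : Matrix m n R}
    (hX : X ≤ₑ X') (hY : Y ≤ₑ Y') (hX' : 0 ≤ₑ X') (hY₀ : 0 ≤ₑ Y) : X * Y ≤ₑ X' * Y' :=
  fun i j => by
    simp only [Matrix.mul_apply]
    exact Finset.sum_le_sum fun k _ => mul_le_mul (hX i k) (hY k j) (hY₀ k j) (hX' i k)

variable {n : Type*} [Fintype n] [DecidableEq n]

lemma list_prod_nonneg {l : List (Matrix n n R)} (hl : ∀ X ∈ l, 0 ≤ₑ X) : 0 ≤ₑ l.prod :=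
  list_prod_mem (S := (Subsemiring.nonneg R).matrix) hl

lemma list_prod_map {ι : Type*} {F G : ι → Matrix n n R} (hF : ∀ t, 0 ≤ₑ F t)
    (hFG : ∀ t, F t ≤ₑ G t) (l : List ι) : (l.map F).prod ≤ₑ (l.map G).prod := by
  induction l with
  | nil => exact refl 1
  | cons t l ih =>
    simp only [List.map_cons, List.prod_cons]
    exact (hFG t).mul ih ((hF t).trans (hFG t)) (list_prod_nonneg (by simpa using fun t _ => hF t))

lemma list_prod_of_sublist {l₁ l₂ : List (Matrix n n R)} (h : l₁.Sublist l₂)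
    (hl₂ : ∀ X ∈ l₂, 1 ≤ₑ X) : l₁.prod ≤ₑ l₂.prod := by
  have prod_nonneg {l : List (Matrix n n R)} (hl : ∀ X ∈ l, 1 ≤ₑ X) : 0 ≤ₑ l.prod :=
    list_prod_nonneg fun X hX => zero_le_one.trans (hl X hX)
  induction h with
  | slnil => exact refl 1
  | cons X h ih =>
    obtain ⟨hX, hl₂⟩ := List.forall_mem_cons.1 hl₂
    simpa using hX.mul (ih hl₂) (zero_le_one.trans hX) (prod_nonneg fun Y hY => hl₂ Y (h.subset hY))
  | cons_cons X h ih =>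
    obtain ⟨hX, hl₂⟩ := List.forall_mem_cons.1 hl₂
    simpa using (refl X).mul (ih hl₂) (zero_le_one.trans hX)
      (prod_nonneg fun Y hY => hl₂ Y (h.subset hY))

end Semiring

end EntrywiseLE

lemma exists_le_count_of_card_mul_le_length {κ : Type*} [Fintype κ] [Nonempty κ] [DecidableEq κ]
    {l : List κ} {k : ℕ} (hl : Fintype.card κ * k ≤ l.length) : ∃ j, k ≤ l.count j := by
  have sum_count : ∑ j, l.count j = l.length := by
    simpa using Multiset.sum_count_eq_card (s := Finset.univ) (m := (l : Multiset κ)) (by simp)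
  obtain ⟨j, -, hj⟩ := Finset.exists_le_of_sum_le (s := Finset.univ) (f := fun _ : κ => k)
    (g := l.count) Finset.univ_nonempty (by simpa [sum_count] using hl)
  exact ⟨j, hj⟩

lemma exists_smul_pow_entrywiseLE_list_prod {ι κ n R : Type*} [Fintype κ] [Nonempty κ]
    [Fintype n] [DecidableEq n] [CommSemiring R] [PartialOrder R] [IsOrderedRing R]
    {β : R} (hβ : 0 ≤ β) {A : κ → Matrix n n R} (hA : ∀ j, 1 ≤ₑ A j)
    {M : ι → Matrix n n R} {f : ι → κ} (hM : ∀ t, β • A (f t) ≤ₑ M t)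
    {l : List ι} {k : ℕ} (hl : Fintype.card κ * k ≤ l.length) :
    ∃ j, β ^ l.length • A j ^ k ≤ₑ (l.map M).prod := by
  classical
  obtain ⟨j, hj⟩ := exists_le_count_of_card_mul_le_length (l := l.map f) (by simpa using hl)
  have pow_le : A j ^ k ≤ₑ (l.map (A ∘ f)).prod := by
    have hsub : (List.replicate k (A j)).Sublist (l.map (A ∘ f)) := by
      simpa using (List.replicate_sublist_iff.2 hj).map A
    simpa using EntrywiseLE.list_prod_of_sublist hsub (by simpa using fun t _ => hA (f t))
  have smul_le : β ^ l.length • (l.map (A ∘ f)).prod ≤ₑ (l.map M).prod := by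
    have nonneg (t : ι) : 0 ≤ₑ β • A (f t) := fun i i' =>
      mul_nonneg hβ (EntrywiseLE.zero_le_one.trans (hA (f t)) i i')
    have smul_prod : β ^ l.length • (l.map (A ∘ f)).prod = (l.map fun t => β • A (f t)).prod := by
      simpa [Function.comp_def] using List.smul_prod (l.map (A ∘ f)) β
    exact smul_prod ▸ EntrywiseLE.list_prod_map nonneg hM l
  exact ⟨j, (pow_le.smul (pow_nonneg hβ _)).trans smul_le⟩

/-- The subsemiring `{0} ∪ [1, ∞)` of an ordered semiring, whose closure properties turn positivity
of an entry of a matrix power into the lower bound `1`. -/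
def zeroOrOneLE (R : Type*) [Semiring R] [PartialOrder R] [IsOrderedRing R] : Subsemiring R where
  carrier := {x | x = 0 ∨ 1 ≤ x}
  zero_mem' := Or.inl rfl
  one_mem' := Or.inr le_rfl
  add_mem' := by
    rintro x y (rfl | hx) (rfl | hy)
    · simp
    · simp [hy]
    · simp [hx]
    · exact Or.inr (le_add_of_le_of_nonneg hx (zero_le_one.trans hy))
  mul_mem' := by
    rintro x y (rfl | hx) (rfl | hy)
    · simp
    · simp
    · simp
    · exact Or.inr (one_le_mul_of_one_le_of_one_le hx hy)

lemma one_le_pow_apply_of_pos {n R : Type*} [Fintype n] [DecidableEq n] [Semiring R]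
    [PartialOrder R] [IsOrderedRing R] {A : Matrix n n R} (hA : ∀ i j, A i j = 0 ∨ 1 ≤ A i j)
    {k : ℕ} {i j : n} (hpos : 0 < (A ^ k) i j) : 1 ≤ (A ^ k) i j := by
  have hmem : A ^ k ∈ (zeroOrOneLE R).matrix := pow_mem (show A ∈ (zeroOrOneLE R).matrix from hA) k
  exact (hmem i j).resolve_left hpos.ne'

section Stochastic

variable {N : ℕ}

lemma rowStochastic_list_prod {l : List (Matrix (Fin N) (Fin N) ℝ)}
    (hl : ∀ X ∈ l, RowStochastic X) : RowStochastic l.prod :=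
  Matrix.mem_rowStochastic_iff_sum.1 <|
    list_prod_mem fun X hX => Matrix.mem_rowStochastic_iff_sum.2 (hl X hX)

lemma ergLam_le_one_sub_of_le_column {Q : Matrix (Fin N) (Fin N) ℝ} (hQ : ∀ r c, 0 ≤ Q r c)
    {b : ℝ} {c : Fin N} (hb : ∀ r, b ≤ Q r c) : ergLam Q ≤ 1 - b := by
  have : Nonempty (Fin N) := ⟨c⟩
  refine sub_le_sub_left (le_ciInf fun p => ?_) 1
  calc b ≤ min (Q p.1 c) (Q p.2 c) := le_min (hb p.1) (hb p.2)
    _ ≤ ∑ j, min (Q p.1 j) (Q p.2 j) :=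
      Finset.single_le_sum (f := fun j => min (Q p.1 j) (Q p.2 j))
        (fun j _ => le_min (hQ p.1 j) (hQ p.2 j)) (Finset.mem_univ c)

theorem stmt_14_general {κ : Type*} [Fintype κ] [Nonempty κ] {k n : ℕ} {β : ℝ} (hβ : 0 ≤ β)
    {A : κ → Matrix (Fin N) (Fin N) ℝ} (hA : ∀ j r c, A j r c = 0 ∨ 1 ≤ A j r c)
    (hdiag : ∀ j r, 0 < A j r r) (hcol : ∀ j, ∃ c, ∀ r, 0 < (A j ^ k) r c)
    (hn : Fintype.card κ * k ≤ n) {M : Fin n → Matrix (Fin N) (Fin N) ℝ}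
    (hMrs : ∀ t, RowStochastic (M t)) (hMA : ∀ t, ∃ j, ∀ r c, β * A j r c ≤ M t r c) :
    RowStochastic (List.ofFn M).prod ∧ ergLam (List.ofFn M).prod ≤ 1 - β ^ n := by
  have hQ : RowStochastic (List.ofFn M).prod :=
    rowStochastic_list_prod (by simpa [List.mem_ofFn] using hMrs)
  have one_le (j : κ) : 1 ≤ₑ A j :=
    EntrywiseLE.one_le_of_one_le_diag (fun r c => (hA j r c).elim Eq.ge zero_le_one.trans)
      fun r => (hA j r r).resolve_left (hdiag j r).ne'
  choose f hf using hMA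
  obtain ⟨j, hj⟩ : ∃ j, β ^ n • A j ^ k ≤ₑ (List.ofFn M).prod := by
    simpa [List.ofFn_eq_map] using
      exists_smul_pow_entrywiseLE_list_prod hβ one_le hf (l := List.finRange n) (by simpa using hn)
  obtain ⟨c, hc⟩ := hcol j
  refine ⟨hQ, ergLam_le_one_sub_of_le_column hQ.1 (c := c) fun r => ?_⟩
  calc β ^ n ≤ β ^ n * (A j ^ k) r c :=
        le_mul_of_one_le_right (pow_nonneg hβ n) (one_le_pow_apply_of_pos (hA j) (hc r))
    _ ≤ (List.ofFn M).prod r c := hj r c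

end Stochastic

/-- Let `A_1, …, A_τ` be 0–1 matrices with unit diagonals such that each `A_j ^ N` has an
all-positive column, and let `M_1, …, M_{τN}` be row-stochastic matrices with
`M_t ≥ β • A_{j(t)}` entrywise for some `j(t)`. Then `Q = M_1 ⋯ M_{τN}` is a row-stochastic
scrambling matrix with `λ(Q) ≤ 1 - β^{τN} < 1`. -/
theorem stmt_14 (N τ : ℕ) (hN : 1 ≤ N) (hτ : 1 ≤ τ)
    (β : ℝ) (hβ0 : 0 < β) (hβ1 : β ≤ 1)
    (A : Fin τ → Matrix (Fin N) (Fin N) ℝ)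
    (hA01 : ∀ j r c, A j r c = 0 ∨ A j r c = 1)
    (hdiag : ∀ j r, A j r r = 1)
    (hcol : ∀ j, ∃ c, ∀ r, 0 < (A j ^ N) r c)
    (M : Fin (τ * N) → Matrix (Fin N) (Fin N) ℝ)
    (hMrs : ∀ t, RowStochastic (M t))
    (hMA : ∀ t, ∃ j, ∀ r c, β * A j r c ≤ M t r c) :
    RowStochastic (List.ofFn M).prod ∧
      ergLam (List.ofFn M).prod ≤ 1 - β ^ (τ * N) ∧
      (1 : ℝ) - β ^ (τ * N) < 1 := by
  have : Nonempty (Fin τ) := ⟨⟨0, hτ⟩⟩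
  obtain ⟨hQ, hlam⟩ := stmt_14_general hβ0.le
    (fun j r c => (hA01 j r c).imp_right Eq.ge) (fun j r => by simp [hdiag]) hcol (by simp) hMrs hMA
  exact ⟨hQ, hlam, sub_lt_self 1 (pow_pos hβ0 _)⟩
end

section
/- Let (M_t)_{t≥1} be a sequence of N×N row-stochastic matrices and suppose there exist γ with 0 < γ ≤ 1 and an integer L ≥ 1 such that for every k ≥ 0 the block product P_k = M_{(k+1)L} M_{(k+1)L−1} ⋯ M_{kL+1} satisfies λ(P_k) ≤ 1 − γ. Then δ(M_T M_{T−1} ⋯ M_1) → 0 as T → ∞. -/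
/-- `δ(Q) = max_j max_{i₁,i₂} |Q i₁ j - Q i₂ j|`. -/
noncomputable def ergDel {N : ℕ} (Q : Matrix (Fin N) (Fin N) ℝ) : ℝ :=
  ⨆ p : (Fin N × Fin N) × Fin N, |Q p.1.1 p.2 - Q p.1.2 p.2|

/-- The backward product `M_T * M_{T-1} * ⋯ * M_1` (and the identity for `T = 0`). -/
noncomputable def backProd {N : ℕ} (M : ℕ → Matrix (Fin N) (Fin N) ℝ) :
    ℕ → Matrix (Fin N) (Fin N) ℝ
  | 0 => 1
  | T + 1 => M (T + 1) * backProd M T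

/-- The block product `P_k = M_{(k+1)L} * M_{(k+1)L - 1} * ⋯ * M_{kL+1}`. -/
noncomputable def blockProd {N : ℕ} (M : ℕ → Matrix (Fin N) (Fin N) ℝ) (L k : ℕ) :
    Matrix (Fin N) (Fin N) ℝ :=
  ((List.range L).map fun s => M ((k + 1) * L - s)).prod

/-!
Two rows `p`, `q` of a stochastic matrix `Q` share the mass `∑ j, min (p j) (q j) ≥ 1 - λ(Q)`. In
the difference of the averages of a column of `X` against `p` and `q` this common part cancels, and
the remaining mass, at most `λ(Q)`, sees entries of the column at distance at most `δ(X)`. Hence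
`δ(Q * X) ≤ λ(Q) * δ(X)`. Since `λ ≤ 1`, the sequence `δ(M_T ⋯ M_1)` is antitone, while along
`T = k * L` it is at most `(∏ i < k, λ(P_i)) * δ(1)`.
-/

section WeightedSums

variable {ι R : Type*} [Fintype ι] [CommRing R] [LinearOrder R] [IsOrderedRing R]
  {p q f : ι → R} {d : R}

theorem sum_mul_sub_sum_mul_le (hpq : ∑ i, p i = ∑ i, q i) (hf : ∀ i j, f i - f j ≤ d) :
    ∑ i, p i * f i - ∑ i, q i * f i ≤ (∑ i, p i - ∑ i, min (p i) (q i)) * d := by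
  cases isEmpty_or_nonempty ι
  · simp
  obtain ⟨m, hm⟩ := Finite.exists_min f
  calc ∑ i, p i * f i - ∑ i, q i * f i
      = ∑ i, (p i - q i) * (f i - f m) := by
        simp only [mul_sub, sub_mul, Finset.sum_sub_distrib, ← Finset.sum_mul, hpq, sub_self,
          sub_zero]
    _ ≤ ∑ i, (p i - min (p i) (q i)) * (f i - f m) := by
        gcongr with i
        · exact sub_nonneg.2 (hm i)
        · exact min_le_right _ _
    _ ≤ ∑ i, (p i - min (p i) (q i)) * d := by
        gcongr with i
        · exact sub_nonneg.2 (min_le_left _ _)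
        · exact hf i m
    _ = (∑ i, p i - ∑ i, min (p i) (q i)) * d := by
        rw [← Finset.sum_mul, Finset.sum_sub_distrib]

theorem abs_sum_mul_sub_sum_mul_le (hpq : ∑ i, p i = ∑ i, q i) (hf : ∀ i j, |f i - f j| ≤ d) :
    |∑ i, p i * f i - ∑ i, q i * f i| ≤ (∑ i, p i - ∑ i, min (p i) (q i)) * d := by
  have hf' : ∀ i j, f i - f j ≤ d := fun i j => (le_abs_self _).trans (hf i j)
  refine abs_sub_le_iff.2 ⟨sum_mul_sub_sum_mul_le hpq hf', ?_⟩
  simpa only [hpq, min_comm] using sum_mul_sub_sum_mul_le hpq.symm hf'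

end WeightedSums

theorem tendsto_prod_range_zero_of_le_of_lt_one {a : ℕ → ℝ} {c : ℝ} (ha : ∀ k, 0 ≤ a k)
    (hac : ∀ k, a k ≤ c) (hc : c < 1) :
    Filter.Tendsto (fun n => ∏ k ∈ Finset.range n, a k) Filter.atTop (nhds 0) := by
  have hpow : Filter.Tendsto (fun n => c ^ n) Filter.atTop (nhds 0) :=
    tendsto_pow_atTop_nhds_zero_of_lt_one ((ha 0).trans (hac 0)) hc
  refine squeeze_zero (fun n => Finset.prod_nonneg fun k _ => ha k) (fun n => ?_) hpow
  simpa using Finset.prod_le_prod (s := Finset.range n) (fun k _ => ha k) fun k _ => hac k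

section Coefficients

variable {N : ℕ} {Q : Matrix (Fin N) (Fin N) ℝ}

theorem rowStochastic_iff_mem :
    RowStochastic Q ↔ Q ∈ Matrix.rowStochastic ℝ (Fin N) :=
  Matrix.mem_rowStochastic_iff_sum.symm

theorem one_sub_sum_min_le_ergLam (Q : Matrix (Fin N) (Fin N) ℝ) (a b : Fin N) :
    1 - ∑ j, min (Q a j) (Q b j) ≤ ergLam Q :=
  sub_le_sub_left (ciInf_le (f := fun p : Fin N × Fin N => ∑ j, min (Q p.1 j) (Q p.2 j))
    (Set.finite_range _).bddBelow (a, b)) 1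

theorem ergLam_nonneg (hQ : ∀ i, ∑ j, Q i j = 1) : 0 ≤ ergLam Q := by
  cases isEmpty_or_nonempty (Fin N) with
  | inl _ => simp [ergLam]
  | inr h =>
    obtain ⟨a⟩ := h
    simpa [hQ a] using one_sub_sum_min_le_ergLam Q a a

theorem ergLam_le_one (hQ : ∀ i j, 0 ≤ Q i j) : ergLam Q ≤ 1 :=
  sub_le_self 1 <| Real.iInf_nonneg fun p =>
    Finset.sum_nonneg fun j _ => le_min (hQ p.1 j) (hQ p.2 j)

theorem ergDel_nonneg (X : Matrix (Fin N) (Fin N) ℝ) : 0 ≤ ergDel X :=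
  Real.iSup_nonneg fun _ => abs_nonneg _

theorem abs_sub_le_ergDel (X : Matrix (Fin N) (Fin N) ℝ) (a b c : Fin N) :
    |X a c - X b c| ≤ ergDel X :=
  le_ciSup (f := fun p : (Fin N × Fin N) × Fin N => |X p.1.1 p.2 - X p.1.2 p.2|)
    (Set.finite_range _).bddAbove ((a, b), c)

theorem ergDel_mul_le_ergLam_mul (hQ : ∀ i, ∑ j, Q i j = 1) (X : Matrix (Fin N) (Fin N) ℝ) :
    ergDel (Q * X) ≤ ergLam Q * ergDel X := by
  refine Real.iSup_le ?_ (mul_nonneg (ergLam_nonneg hQ) (ergDel_nonneg X))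
  rintro ⟨⟨a, b⟩, c⟩
  calc |(Q * X) a c - (Q * X) b c|
      ≤ (∑ j, Q a j - ∑ j, min (Q a j) (Q b j)) * ergDel X := by
        simp only [Matrix.mul_apply]
        exact abs_sum_mul_sub_sum_mul_le ((hQ a).trans (hQ b).symm)
          fun i j => abs_sub_le_ergDel X i j c
    _ ≤ ergLam Q * ergDel X := by
        rw [hQ a]
        exact mul_le_mul_of_nonneg_right (one_sub_sum_min_le_ergLam Q a b) (ergDel_nonneg X)

theorem ergDel_mul_le (hQ : RowStochastic Q) (X : Matrix (Fin N) (Fin N) ℝ) :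
    ergDel (Q * X) ≤ ergDel X :=
  (ergDel_mul_le_ergLam_mul hQ.2 X).trans
    (mul_le_of_le_one_left (ergDel_nonneg X) (ergLam_le_one hQ.1))

end Coefficients

section Products

variable {N : ℕ} {M : ℕ → Matrix (Fin N) (Fin N) ℝ}

theorem backProd_add (M : ℕ → Matrix (Fin N) (Fin N) ℝ) (m n : ℕ) :
    backProd M (m + n) = ((List.range m).map fun s => M (m + n - s)).prod * backProd M n := by
  induction m with
  | zero => simp
  | succ m ih =>
    have hindex : ∀ s, m + 1 + n - (s + 1) = m + n - s := by omega
    simp only [List.range_succ_eq_map, List.map_cons, List.map_map, List.prod_cons,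
      Function.comp_def, Nat.succ_eq_add_one, hindex, Nat.sub_zero, mul_assoc, ← ih]
    rw [Nat.add_right_comm, backProd]

theorem backProd_succ_mul (M : ℕ → Matrix (Fin N) (Fin N) ℝ) (L k : ℕ) :
    backProd M ((k + 1) * L) = blockProd M L k * backProd M (k * L) := by
  rw [blockProd, add_one_mul, add_comm, backProd_add]

theorem rowStochastic_blockProd (hM : ∀ t, 1 ≤ t → RowStochastic (M t)) (L k : ℕ) :
    RowStochastic (blockProd M L k) := by
  refine rowStochastic_iff_mem.2 (list_prod_mem ?_)
  simp only [List.mem_map, List.mem_range, forall_exists_index, and_imp, forall_apply_eq_imp_iff₂]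
  intro s hs
  have hL : L ≤ (k + 1) * L := Nat.le_mul_of_pos_left L k.succ_pos
  exact rowStochastic_iff_mem.1 (hM _ (by omega))

theorem antitone_ergDel_backProd (hM : ∀ t, 1 ≤ t → RowStochastic (M t)) :
    Antitone fun T => ergDel (backProd M T) :=
  antitone_nat_of_succ_le fun T => ergDel_mul_le (hM (T + 1) T.succ_pos) (backProd M T)

theorem ergDel_backProd_mul_le (hM : ∀ t, 1 ≤ t → RowStochastic (M t)) (L k : ℕ) :
    ergDel (backProd M (k * L)) ≤
      (∏ i ∈ Finset.range k, ergLam (blockProd M L i)) * ergDel (backProd M 0) := by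
  induction k with
  | zero => simp
  | succ k ih =>
    have hP : ∀ i, ∑ j, blockProd M L k i j = 1 := (rowStochastic_blockProd hM L k).2
    calc ergDel (backProd M ((k + 1) * L))
        ≤ ergLam (blockProd M L k) * ergDel (backProd M (k * L)) := by
          rw [backProd_succ_mul]
          exact ergDel_mul_le_ergLam_mul hP _
      _ ≤ ergLam (blockProd M L k) *
            ((∏ i ∈ Finset.range k, ergLam (blockProd M L i)) * ergDel (backProd M 0)) :=
          mul_le_mul_of_nonneg_left ih (ergLam_nonneg hP)
      _ = (∏ i ∈ Finset.range (k + 1), ergLam (blockProd M L i)) * ergDel (backProd M 0) := by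
          rw [Finset.prod_range_succ_comm, mul_assoc]

end Products

theorem stmt_15_general (N : ℕ) (M : ℕ → Matrix (Fin N) (Fin N) ℝ)
    (hM : ∀ t, 1 ≤ t → RowStochastic (M t)) (L : ℕ) (hL : 1 ≤ L)
    (hprod : Filter.Tendsto (fun n => ∏ k ∈ Finset.range n, ergLam (blockProd M L k))
      Filter.atTop (nhds 0)) :
    Filter.Tendsto (fun T => ergDel (backProd M T)) Filter.atTop (nhds 0) := by
  have hsubseq : Filter.Tendsto (fun k => k * L) Filter.atTop Filter.atTop :=
    Filter.tendsto_id.atTop_mul_const' hL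
  rw [tendsto_iff_tendsto_subseq_of_antitone (antitone_ergDel_backProd hM) hsubseq]
  refine squeeze_zero (fun k => ergDel_nonneg _) (fun k => ergDel_backProd_mul_le hM L k) ?_
  simpa only [zero_mul] using hprod.mul_const (ergDel (backProd M 0))

/-- If `(M_t)_{t ≥ 1}` are row-stochastic and there are `0 < γ ≤ 1` and `L ≥ 1` such that
every block product `P_k = M_{(k+1)L} ⋯ M_{kL+1}` satisfies `λ(P_k) ≤ 1 - γ`, then
`δ(M_T M_{T-1} ⋯ M_1) → 0` as `T → ∞`. -/
theorem stmt_15 (N : ℕ) (M : ℕ → Matrix (Fin N) (Fin N) ℝ)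
    (hM : ∀ t, 1 ≤ t → RowStochastic (M t))
    (γ : ℝ) (hγ0 : 0 < γ) (hγ1 : γ ≤ 1) (L : ℕ) (hL : 1 ≤ L)
    (hblock : ∀ k : ℕ, ergLam (blockProd M L k) ≤ 1 - γ) :
    Filter.Tendsto (fun T => ergDel (backProd M T)) Filter.atTop (nhds 0) := by
  have hnonneg k := ergLam_nonneg (rowStochastic_blockProd hM L k).2
  exact stmt_15_general N M hM L hL
    (tendsto_prod_range_zero_of_le_of_lt_one hnonneg hblock (sub_lt_self 1 hγ0))
end

section
/- Suppose that for every partition of V into three disjoint sets A, B, F with A ≠ ∅, B ≠ ∅ and |F| ≤ f, either A propagates in V−F to B or B propagates in V−F to A. Then G satisfies Condition NC for parameters f and l for every l ≥ n − 1 (for which the length restriction on paths is vacuous). -/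
/-- `A` propagates in `V - F` to `B`: either `B = ∅`, or for every `b ∈ B` there are at
least `f + 1` directed paths in `G` from vertices of `A` to `b` avoiding all vertices of `F`
and pairwise vertex-disjoint except possibly at `b`. -/
def Propagates {V : Type} (E : V → V → Prop) (f : ℕ) (F A B : Finset V) : Prop :=
  B = ∅ ∨ ∀ b ∈ B, ∃ P : Fin (f + 1) → List V,
    (∀ j, (P j).Chain' E ∧ (P j).Nodup ∧ (∃ a ∈ A, (P j).head? = some a) ∧
      (P j).getLast? = some b ∧ ∀ v ∈ P j, v ∉ F) ∧
    ∀ j j', j ≠ j' → ∀ v, v ∈ P j → v ∈ P j' → v = b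

/-- `A, B, F` form a partition of the vertex set into three pairwise disjoint sets. -/
def IsPartition3 {V : Type} [Fintype V] [DecidableEq V] (A B F : Finset V) : Prop :=
  A ∪ B ∪ F = Finset.univ ∧ Disjoint A B ∧ Disjoint A F ∧ Disjoint B F

/-!
If `A` propagates to `B`, then for every `b ∈ B` the `f + 1` paths from `A` to `b` pairwise meet
only at `b`. A cut does not contain `b`, so it meets these paths in distinct vertices and has at
least `f + 1` elements. Given a partition `L, C, R, F`, the hypothesis is applied to the partition
`L ∪ C, R, F`; if it is `R` that propagates to `L ∪ C`, then `R ∪ C` propagates to `L`.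
-/

theorem IsPartition4.isPartition3_union {V : Type} [Fintype V] [DecidableEq V]
    {L C R F : Finset V} (h : IsPartition4 L C R F) : IsPartition3 (L ∪ C) R F := by
  obtain ⟨hcover, -, hLR, hLF, hCR, hCF, hRF⟩ := h
  exact ⟨hcover, Finset.disjoint_union_left.2 ⟨hLR, hCR⟩,
    Finset.disjoint_union_left.2 ⟨hLF, hCF⟩, hRF⟩

section

variable {V : Type} {E : V → V → Prop} {f l : ℕ} {F A A' B B' : Finset V}

theorem isChain_inducedE {p : List V} (hp : p.IsChain E) (hF : ∀ v ∈ p, v ∉ F) :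
    p.IsChain (inducedE E F) :=
  hp.imp_of_mem_imp fun u v hu hv huv => ⟨hF u hu, hF v hv, huv⟩

theorem Propagates.mono (h : Propagates E f F A B) (hA : A ⊆ A') (hB : B' ⊆ B) :
    Propagates E f F A' B' := by
  rcases h with rfl | hpaths
  · exact .inl (Finset.subset_empty.1 hB)
  · refine .inr fun b hb => ?_
    obtain ⟨P, hP, hdisj⟩ := hpaths b (hB hb)
    refine ⟨P, fun j => ?_, hdisj⟩
    obtain ⟨hchain, hnodup, ⟨a, ha, hhead⟩, hlast⟩ := hP j
    exact ⟨hchain, hnodup, ⟨a, hA ha, hhead⟩, hlast⟩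

theorem IsCut.card_le_of_disjoint_paths {ι : Type*} [Fintype ι] {x : V} {S : Finset V}
    (hS : IsCut E l A x S) {P : ι → List V} (hP : ∀ j, IsWxPath E l A x (P j))
    (hdisj : ∀ j j', j ≠ j' → ∀ v, v ∈ P j → v ∈ P j' → v = x) :
    Fintype.card ι ≤ S.card := by
  refine Finset.card_le_card_of_forall_subsingleton (fun j v => v ∈ P j)
    (fun j _ => hS.2 (P j) (hP j)) fun s hs j hj j' hj' => ?_
  by_contra hne
  exact hS.1 (hdisj j j' hne s hj.2 hj'.2 ▸ hs)

theorem Propagates.arrowL [Fintype V] (h : Propagates E f F A B) (hB : B.Nonempty)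
    (hl : Fintype.card V - 1 ≤ l) : ArrowL (inducedE E F) f l A B := by
  obtain ⟨b, hb⟩ := hB
  obtain ⟨P, hP, hdisj⟩ := h.resolve_left (Finset.ne_empty_of_mem hb) b hb
  have hpath : ∀ j, IsWxPath (inducedE E F) l A b (P j) := fun j => by
    obtain ⟨hchain, hnodup, hhead, hlast, havoid⟩ := hP j
    have hlength : (P j).length ≤ Fintype.card V := hnodup.length_le_card
    exact ⟨isChain_inducedE hchain havoid, hnodup, hhead, hlast, by lia⟩
  exact ⟨b, hb, fun S hS => by simpa using hS.card_le_of_disjoint_paths hpath hdisj⟩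

end

theorem stmt_17_general {V : Type} [Fintype V] [DecidableEq V] (E : V → V → Prop) (f : ℕ)
    (hprop : ∀ A B F : Finset V, IsPartition3 A B F → A.Nonempty → B.Nonempty →
      F.card ≤ f → Propagates E f F A B ∨ Propagates E f F B A) :
    ∀ l : ℕ, Fintype.card V - 1 ≤ l → CondNC E f l := by
  intro l hl L C R F hpart hL hR hF
  rcases hprop (L ∪ C) R F hpart.isPartition3_union (hL.mono Finset.subset_union_left) hR hF with
    hLCR | hRLC
  · exact .inr (hLCR.arrowL hR hl)
  · have hRCL : Propagates E f F (R ∪ C) L :=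
      hRLC.mono Finset.subset_union_left Finset.subset_union_left
    exact .inl (hRCL.arrowL hL hl)

/-- If for every partition `A, B, F` of `V` with `A, B` nonempty and `|F| ≤ f` either `A`
propagates in `V - F` to `B` or `B` propagates in `V - F` to `A`, then `G` satisfies
Condition NC for parameters `f` and `l` for every `l ≥ n - 1`. -/
theorem stmt_17 {V : Type} [Fintype V] [DecidableEq V] (E : V → V → Prop)
    (hself : ∀ v, E v v) (hn : 2 ≤ Fintype.card V) (f : ℕ)
    (hprop : ∀ A B F : Finset V, IsPartition3 A B F → A.Nonempty → B.Nonempty →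
      F.card ≤ f → Propagates E f F A B ∨ Propagates E f F B A) :
    ∀ l : ℕ, Fintype.card V - 1 ≤ l → CondNC E f l :=
  stmt_17_general E f hprop
end
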